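/- If A is a C*-algebra (A ≠ {0}) in which the spectrum of every self-adjoint element is finite, then there exist n ∈ ℕ and d₁, …, d_n ∈ ℕ such that A is *-isomorphic to the direct sum of matrix algebras ⨁_{k=1}^{n} M_{d_k}(ℂ); moreover A is abelian if and only if d_k = 1 for every k. -/

import Mathlib

/-- A projection `p ≠ 0` is minimal when the corner `p A p` consists of the scalar multiples
of `p`. -/
structure IsMinimalProjection {A : Type*} [NonUnitalCStarAlgebra A] (p : A) : Prop where
  isStarProjection : IsStarProjection p
  ne_zero : p ≠ 0
  exists_smul_eq : ∀ a : A, ∃ c : ℂ, p * a * p = c • p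

theorem mem_quasispectrum_of_mul_eq_smul {𝕜 A : Type*} [Field 𝕜] [NonUnitalRing A] [Module 𝕜 A]
    [IsScalarTower 𝕜 A A] [SMulCommClass 𝕜 A A] {a x : A} {μ : 𝕜} (hμ : μ ≠ 0) (hx : x ≠ 0)
    (hax : a * x = μ • x) : μ ∈ quasispectrum 𝕜 a := by
  refine quasispectrum.mem_of_not_quasiregular a (r := Units.mk0 μ hμ) fun hq ↦ ?_
  obtain ⟨z, -, hz⟩ := isQuasiregular_iff.mp hq
  have hyx : -((Units.mk0 μ hμ)⁻¹ • a) * x = -x := by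
    simp [Units.smul_def, smul_mul_assoc, hax, smul_smul, hμ]
  generalize -((Units.mk0 μ hμ)⁻¹ • a) = y at hz hyx
  have := congrArg (· * x) hz
  simp only [add_mul, mul_assoc, hyx, zero_mul, mul_neg] at this
  exact hx (by simpa using this)

section Projections

variable {A : Type*} [NonUnitalCStarAlgebra A]

theorem exists_eigenprojection {a : A} (ha : IsSelfAdjoint a) (hfin : (quasispectrum ℂ a).Finite)
    (ha0 : a ≠ 0) :
    ∃ (c : ℂ) (r : A), c ≠ 0 ∧ IsStarProjection r ∧ r ≠ 0 ∧ a * r = c • r ∧ r * a = c • r := by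
  have hn : IsStarNormal a := ha.isStarNormal
  obtain ⟨c, hc, hc0⟩ : ∃ c ∈ quasispectrum ℂ a, c ≠ 0 := by
    by_contra! hcon
    refine ha0 ?_
    rw [← cfcₙ_id ℂ a, ← cfcₙ_const_zero ℂ a]
    exact cfcₙ_congr fun x hx ↦ hcon x hx
  classical
  let f : ℂ → ℂ := fun z ↦ if z = c then 1 else 0
  have hf : ContinuousOn f (quasispectrum ℂ a) := hfin.continuousOn f
  have hf0 : f 0 = 0 := by simp [f, hc0.symm]
  have hmul : a * cfcₙ f a = c • cfcₙ f a := by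
    conv_lhs => enter [1]; rw [← cfcₙ_id' ℂ a]
    rw [← cfcₙ_mul (fun x ↦ x) f a, ← cfcₙ_smul c f a]
    refine cfcₙ_congr fun x _ ↦ ?_
    by_cases hx : x = c <;> simp [f, hx]
  have hsa : star (cfcₙ f a) = cfcₙ f a := by
    rw [← cfcₙ_star]
    refine cfcₙ_congr fun x _ ↦ ?_
    by_cases hx : x = c <;> simp [f, hx]
  have hmul' : cfcₙ f a * a = c • cfcₙ f a := by
    conv_lhs => enter [2]; rw [← cfcₙ_id' ℂ a]
    rw [← cfcₙ_mul f (fun x ↦ x) a, ← cfcₙ_smul c f a]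
    refine cfcₙ_congr fun x _ ↦ ?_
    by_cases hx : x = c <;> simp [f, hx]
  refine ⟨c, cfcₙ f a, hc0, ⟨?_, hsa⟩, fun h0 ↦ ?_, hmul, hmul'⟩
  · rw [IsIdempotentElem, ← cfcₙ_mul f f a]
    refine cfcₙ_congr fun x _ ↦ ?_
    by_cases hx : x = c <;> simp [f, hx]
  · have h1 : (1 : ℂ) ∈ f '' quasispectrum ℂ a := ⟨c, hc, by simp [f]⟩
    rw [← cfcₙ_map_quasispectrum f a, h0, CFC.quasispectrum_zero_eq] at h1
    exact one_ne_zero h1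

theorem IsStarProjection.mul_eq_of_mul_eq {p q : A} (hp : IsStarProjection p)
    (hq : IsStarProjection q) (h : q * p = q) : p * q = q := by
  simpa [hp.isSelfAdjoint.star_eq, hq.isSelfAdjoint.star_eq] using congrArg star h

theorem IsMinimalProjection.exists_partialIsometry {p q a : A} (hp : IsMinimalProjection p)
    (hq : IsMinimalProjection q) (ha : q * a * p ≠ 0) :
    ∃ v : A, star v * v = p ∧ v * star v = q ∧ v * p = v := by
  have hpp : p * p = p := hp.isStarProjection.isIdempotentElem
  have hqq : q * q = q := hq.isStarProjection.isIdempotentElem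
  have hps : star p = p := hp.isStarProjection.isSelfAdjoint
  have hqs : star q = q := hq.isStarProjection.isSelfAdjoint
  obtain ⟨x, hx⟩ : ∃ x, x = q * a * p := ⟨_, rfl⟩
  rw [← hx] at ha
  have hxp : x * p = x := by rw [hx, mul_assoc, hpp]
  have hqx : q * x = x := by rw [hx, ← mul_assoc, ← mul_assoc, hqq]
  have hpx : p * star x = star x := by simpa [hps] using congrArg star hxp
  have hxq : star x * q = star x := by simpa [hqs] using congrArg star hqx
  obtain ⟨c, hc⟩ := hp.exists_smul_eq (star x * x)
  rw [← mul_assoc, hpx, mul_assoc, hxp] at hc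
  have hc0 : c ≠ 0 := by
    rintro rfl
    exact ha ((CStarRing.star_mul_self_eq_zero_iff x).mp (by simpa using hc))
  have hcre : ((c.re : ℝ) : ℂ) = c := by
    have h1 : star c • p = c • p := by
      simpa [hc, hps] using (IsSelfAdjoint.star_mul_self x).star_eq
    exact Complex.conj_eq_iff_re.mp (smul_left_injective ℂ hp.ne_zero h1)
  have hre0 : c.re ≠ 0 := fun h ↦ hc0 (by rw [← hcre, h, Complex.ofReal_zero])
  have hpos : 0 ≤ c.re := by
    let _ := CStarAlgebra.spectralOrder A
    have := CStarAlgebra.spectralOrderedRing A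
    refine quasispectrum_nonneg_of_nonneg (star x * x) (star_mul_self_nonneg x) _
      (mem_quasispectrum_of_mul_eq_smul hre0 hp.ne_zero ?_)
    rw [hc, smul_mul_assoc, hpp, ← Complex.coe_smul, hcre]
  obtain ⟨s, hs⟩ : ∃ s : ℝ, s = (Real.sqrt c.re)⁻¹ := ⟨_, rfl⟩
  have hsc : (s : ℂ) * (s * c) = 1 := by
    rw [← hcre, ← Complex.ofReal_mul, ← Complex.ofReal_mul, hs, ← mul_assoc, ← mul_inv,
      Real.mul_self_sqrt hpos, inv_mul_cancel₀ hre0, Complex.ofReal_one]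
  obtain ⟨v, hv⟩ : ∃ v, v = (s : ℂ) • x := ⟨_, rfl⟩
  have hvv : star v * v = p := by
    rw [hv, star_smul, smul_mul_assoc, mul_smul_comm, hc, smul_smul, smul_smul,
      Complex.star_def, Complex.conj_ofReal, mul_assoc, hsc, one_smul]
  have hvp : v * p = v := by rw [hv, smul_mul_assoc, hxp]
  have hqv : q * v = v := by rw [hv, mul_smul_comm, hqx]
  have hvq : star v * q = star v := by simpa [hqs] using congrArg star hqv
  obtain ⟨d, hd⟩ := hq.exists_smul_eq (v * star v)
  rw [← mul_assoc, hqv, mul_assoc, hvq] at hd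
  have hidem : v * star v * (v * star v) = v * star v := by
    rw [mul_assoc, ← mul_assoc (star v), hvv, ← mul_assoc, hvp]
  have hd0 : d ≠ 0 := by
    rintro rfl
    rw [zero_smul, CStarRing.mul_star_self_eq_zero_iff] at hd
    exact hp.ne_zero (by rw [← hvv, hd, mul_zero])
  have hd1 : d = 1 := by
    rw [hd, smul_mul_assoc, mul_smul_comm, hqq, smul_smul] at hidem
    exact mul_right_cancel₀ hd0 (by simpa using smul_left_injective ℂ hq.ne_zero hidem)
  exact ⟨v, hvv, by rw [hd, hd1, one_smul], hvp⟩

theorem not_exists_orthogonal_seq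
    (hA : ∀ a : A, IsSelfAdjoint a → (quasispectrum ℂ a).Finite)
    (r : ℕ → A) (hr : ∀ n, IsStarProjection (r n))
    (hr0 : ∀ n, r n ≠ 0) (horth : ∀ m n, m ≠ n → r m * r n = 0) : False := by
  have hsum : Summable fun n ↦ ((1 / 2 : ℂ) ^ n) • r n := by
    refine Summable.of_norm_bounded (g := fun n ↦ (1 / 2 : ℝ) ^ n)
      (summable_geometric_of_lt_one (by norm_num) (by norm_num)) fun n ↦ ?_
    rw [norm_smul]
    have := IsStarProjection.norm_le (r n) (hr n)
    simpa using mul_le_mul_of_nonneg_left this (by positivity : (0 : ℝ) ≤ ‖(1 / 2 : ℂ) ^ n‖)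
  set a := ∑' n, ((1 / 2 : ℂ) ^ n) • r n with ha
  have hsa : IsSelfAdjoint a := by
    rw [IsSelfAdjoint, ha, tsum_star]
    congr 1 with n
    simp [(hr n).isSelfAdjoint.star_eq]
  have har (n : ℕ) : a * r n = ((1 / 2 : ℂ) ^ n) • r n := by
    rw [ha, ← hsum.tsum_mul_right, tsum_eq_single n]
    · rw [smul_mul_assoc, (hr n).isIdempotentElem.eq]
    · intro m hm
      rw [smul_mul_assoc, horth m n hm, smul_zero]
  refine (Set.infinite_of_injective_forall_mem (f := fun n : ℕ ↦ (1 / 2 : ℂ) ^ n) ?_ fun n ↦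
    mem_quasispectrum_of_mul_eq_smul (by simp) (hr0 n) (har n)) (hA a hsa)
  intro m n hmn
  have := congrArg norm hmn
  simp only [norm_pow] at this
  exact pow_right_injective₀ (a := ‖(1 / 2 : ℂ)‖) (by norm_num) (by norm_num) this

theorem wellFounded_starProjection
    (hA : ∀ a : A, IsSelfAdjoint a → (quasispectrum ℂ a).Finite) :
    WellFounded fun q p : {p : A // IsStarProjection p} ↦ q ≠ p ∧ (q * p : A) = q := by
  refine wellFounded_iff_isEmpty_descending_chain.mpr ⟨fun ⟨f, hf⟩ ↦ ?_⟩
  have hle (m k : ℕ) : (f (m + k) * f m : A) = f (m + k) := by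
    induction k with
    | zero => exact (f m).2.isIdempotentElem
    | succ k ih =>
      rw [← add_assoc, ← (hf (m + k)).2, mul_assoc, ih]
  have hle' (m k : ℕ) : (f m * f (m + k) : A) = f (m + k) :=
    (f m).2.mul_eq_of_mul_eq (f (m + k)).2 (hle m k)
  have h1 (m : ℕ) : (f m * f (m + 1) : A) = f (m + 1) := hle' m 1
  have h2 (m n : ℕ) (hmn : m < n) :
      (f m - f (m + 1) : A) * (f n - f (n + 1)) = 0 := by
    obtain ⟨k, rfl⟩ := Nat.exists_eq_add_of_lt hmn
    have e1 := hle' m (k + 1)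
    have e2 := hle' m (k + 2)
    have e3 := hle' (m + 1) k
    have e4 := hle' (m + 1) (k + 1)
    rw [show m + 1 + k = m + k + 1 by ring] at e3
    rw [show m + 1 + (k + 1) = m + k + 1 + 1 by ring] at e4
    simp only [← add_assoc] at e1 e2
    rw [sub_mul, mul_sub, mul_sub, e1, e3, e4, e2]
    simp
  have hsa (m : ℕ) : star (f m - f (m + 1) : A) = f m - f (m + 1) := by
    simp [(f m).2.isSelfAdjoint.star_eq, (f (m + 1)).2.isSelfAdjoint.star_eq]
  refine not_exists_orthogonal_seq hA (fun n ↦ (f n - f (n + 1) : A)) (fun n ↦ ⟨?_, hsa n⟩)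
    (fun n h0 ↦ (hf n).1 (Subtype.ext (sub_eq_zero.mp h0).symm)) fun m n hmn ↦ ?_
  · rw [IsIdempotentElem, sub_mul, mul_sub, mul_sub, h1, (hf n).2, (f n).2.isIdempotentElem.eq,
      (f (n + 1)).2.isIdempotentElem.eq]
    simp
  · rcases hmn.lt_or_gt with hlt | hlt
    · exact h2 m n hlt
    · simpa only [star_mul, hsa, star_zero] using congrArg star (h2 n m hlt)

theorem exists_isMinimalProjection_le
    (hA : ∀ a : A, IsSelfAdjoint a → (quasispectrum ℂ a).Finite)
    {q : A} (hq : IsStarProjection q) (hq0 : q ≠ 0) :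
    ∃ p, IsMinimalProjection p ∧ p * q = p := by
  obtain ⟨⟨p, hp⟩, ⟨hp0, hpq⟩, hmin⟩ := (wellFounded_starProjection hA).has_min
    {p | p.1 ≠ 0 ∧ p.1 * q = p.1} ⟨⟨q, hq⟩, hq0, hq.isIdempotentElem⟩
  dsimp only at hp0 hpq
  have hpp : p * p = p := hp.isIdempotentElem
  have hsa (a : A) (ha : IsSelfAdjoint a) : ∃ c : ℂ, p * a * p = c • p := by
    by_cases h0 : p * a * p = 0
    · exact ⟨0, by simp [h0]⟩
    have hb : IsSelfAdjoint (p * a * p) := by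
      simp [IsSelfAdjoint, hp.isSelfAdjoint.star_eq, ha.star_eq, mul_assoc]
    obtain ⟨c, r, hc, hr, hr0, hbr, hrb⟩ := exists_eigenprojection hb (hA _ hb) h0
    have hrp : r * p = r := by
      have : c • (r * p) = c • r := by
        rw [← smul_mul_assoc, ← hrb, mul_assoc, mul_assoc, hpp]
      exact smul_right_injective A hc this
    have : r = p := by
      by_contra hne
      refine hmin ⟨r, hr⟩ ⟨hr0, ?_⟩ ⟨fun h ↦ hne (congrArg Subtype.val h), hrp⟩
      change r * q = r
      rw [← hrp, mul_assoc, hpq]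
    subst this
    exact ⟨c, by simpa [mul_assoc, hpp] using hbr⟩
  refine ⟨p, ⟨hp, hp0, fun a ↦ ?_⟩, hpq⟩
  obtain ⟨c, hc⟩ := hsa _ (realPart a).2
  obtain ⟨d, hd⟩ := hsa _ (imaginaryPart a).2
  refine ⟨c + Complex.I * d, ?_⟩
  conv_lhs => rw [← realPart_add_I_smul_imaginaryPart a]
  rw [mul_add, add_mul, hc, mul_smul_comm, smul_mul_assoc, hd, smul_smul, add_smul]

theorem exists_orthogonal_isMinimalProjection
    (hA : ∀ a : A, IsSelfAdjoint a → (quasispectrum ℂ a).Finite) :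
    ∃ S : Set A, S.Finite ∧ (∀ p ∈ S, IsMinimalProjection p) ∧
      (S.Pairwise fun p q ↦ p * q = 0) ∧ ∀ a : A, (∀ p ∈ S, p * a = 0) → a = 0 := by
  obtain ⟨S, hS⟩ := zorn_subset
    {S : Set A | (∀ p ∈ S, IsMinimalProjection p) ∧ S.Pairwise fun p q ↦ p * q = 0} (by
      intro c hc hchain
      refine ⟨⋃₀ c, ⟨?_, ?_⟩, fun s ↦ Set.subset_sUnion_of_mem⟩
      · rintro p ⟨s, hs, hp⟩
        exact (hc hs).1 p hp
      · exact (Set.pairwise_sUnion hchain.directedOn).mpr fun s hs ↦ (hc hs).2)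
  refine ⟨S, ?_, hS.prop.1, hS.prop.2, fun a ha ↦ ?_⟩
  · by_contra hinf
    have e := Set.Infinite.natEmbedding S hinf
    refine not_exists_orthogonal_seq hA (fun n ↦ e n)
      (fun n ↦ (hS.prop.1 _ (e n).2).isStarProjection) (fun n ↦ (hS.prop.1 _ (e n).2).ne_zero)
      fun m n hmn ↦ hS.prop.2 (e m).2 (e n).2 fun h ↦ hmn (e.injective (Subtype.ext h))
  · by_contra ha0
    have hb : IsSelfAdjoint (a * star a) := .mul_star_self a
    obtain ⟨c, r, hc, hr, hr0, hbr, hrb⟩ := exists_eigenprojection hb (hA _ hb)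
      ((CStarRing.mul_star_self_eq_zero_iff a).not.mpr ha0)
    obtain ⟨q, hq, hqr⟩ := exists_isMinimalProjection_le hA hr hr0
    have hpr (p : A) (hp : p ∈ S) : p * r = 0 := by
      have : c • (p * r) = 0 := by
        rw [← mul_smul_comm, ← hbr, ← mul_assoc, ← mul_assoc, ha p hp, zero_mul, zero_mul]
      exact (smul_eq_zero.mp this).resolve_left hc
    have hpq (p : A) (hp : p ∈ S) : p * q = 0 := by
      rw [← hr.mul_eq_of_mul_eq hq.isStarProjection hqr, ← mul_assoc, hpr p hp, zero_mul]
    have hqp (p : A) (hp : p ∈ S) : q * p = 0 := by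
      simpa [hq.isStarProjection.isSelfAdjoint.star_eq,
        (hS.prop.1 p hp).isStarProjection.isSelfAdjoint.star_eq] using congrArg star (hpq p hp)
    have hqS : q ∈ S := hS.mem_of_prop_insert ⟨by
      rintro p (rfl | hp)
      exacts [hq, hS.prop.1 p hp], hS.prop.2.insert fun p hp _ ↦ ⟨hqp p hp, hpq p hp⟩⟩
    exact hq.ne_zero (by rw [← hq.isStarProjection.isIdempotentElem.eq, hpq q hqS])

end Projections

/-- Elements `v ⟨k, i⟩` behaving like the `i`-th matrix units of the first column of the `k`-th
block identify the algebra with a direct sum of matrix algebras. -/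
theorem nonempty_starAlgEquiv_of_columns {A : Type*} [NonUnitalCStarAlgebra A] {n : ℕ}
    {d : Fin n → ℕ} (u : Fin n → A) (v : (Σ k, Fin (d k)) → A)
    (hu : ∀ k, IsMinimalProjection (u k)) (huu : ∀ k l, k ≠ l → ∀ a, u k * a * u l = 0)
    (hvu : ∀ x, v x * u x.1 = v x)
    (hvv : ∀ x y, star (v x) * v y = if x = y then u x.1 else 0)
    (hsum : ∀ a, (∑ x, v x * star (v x)) * a = a) :
    Nonempty (A ≃⋆ₐ[ℂ] Π k : Fin n, Matrix (Fin (d k)) (Fin (d k)) ℂ) := by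
  have hus (k) : star (u k) = u k := (hu k).isStarProjection.isSelfAdjoint
  have huv (x) : u x.1 * star (v x) = star (v x) := by
    simpa [hus] using congrArg star (hvu x)
  have hsum' (a) : a * (∑ x, v x * star (v x)) = a := by
    simpa [star_sum] using congrArg star (hsum (star a))
  have hcoef (a : A) (k : Fin n) (i j : Fin (d k)) :
      ∃ c : ℂ, star (v ⟨k, i⟩) * a * v ⟨k, j⟩ = c • u k := by
    obtain ⟨c, hc⟩ := (hu k).exists_smul_eq (star (v ⟨k, i⟩) * a * v ⟨k, j⟩)
    refine ⟨c, ?_⟩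
    rw [← hc, ← mul_assoc, ← mul_assoc, huv ⟨k, i⟩, mul_assoc _ (v ⟨k, j⟩), hvu ⟨k, j⟩]
  have hcross (a : A) (x y : Σ k, Fin (d k)) (hxy : x.1 ≠ y.1) : star (v x) * a * v y = 0 := by
    rw [← huv x, ← hvu y, ← huu x.1 y.1 hxy (star (v x) * a * v y)]
    simp only [mul_assoc]
  choose φ hφ using hcoef
  have huniq {k : Fin n} {c c' : ℂ} (h : c • u k = c' • u k) : c = c' :=
    smul_left_injective ℂ (hu k).ne_zero h
  let Φ : A →⋆ₙₐ[ℂ] Π k : Fin n, Matrix (Fin (d k)) (Fin (d k)) ℂ :=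
    { toFun := fun a k ↦ Matrix.of fun i j ↦ φ a k i j
      map_smul' := fun c a ↦ by
        ext k i j
        refine huniq (k := k) ?_
        simp [← hφ, mul_smul, mul_smul_comm, smul_mul_assoc]
      map_zero' := by
        ext k i j
        refine huniq (k := k) ?_
        simp [← hφ]
      map_add' := fun a b ↦ by
        ext k i j
        refine huniq (k := k) ?_
        simp [← hφ, add_smul, mul_add, add_mul]
      map_mul' := fun a b ↦ by
        ext k i j
        refine huniq (k := k) ?_
        simp only [Matrix.of_apply, Pi.mul_apply, Matrix.mul_apply, Finset.sum_smul]
        conv_lhs => rw [← hφ, ← hsum b]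
        rw [Finset.sum_mul, Finset.mul_sum, Finset.mul_sum, Finset.sum_mul,
          Fintype.sum_sigma, Finset.sum_eq_single k]
        · refine Finset.sum_congr rfl fun m _ ↦ ?_
          have : star (v ⟨k, i⟩) * (a * (v ⟨k, m⟩ * star (v ⟨k, m⟩) * b)) * v ⟨k, j⟩ =
              (star (v ⟨k, i⟩) * a * v ⟨k, m⟩) * (star (v ⟨k, m⟩) * b * v ⟨k, j⟩) := by
            simp only [mul_assoc]
          rw [this, hφ, hφ, smul_mul_assoc, mul_smul_comm, smul_smul,
            (hu k).isStarProjection.isIdempotentElem.eq]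
        · intro l _ hl
          refine Finset.sum_eq_zero fun m _ ↦ ?_
          have : star (v ⟨k, i⟩) * (a * (v ⟨l, m⟩ * star (v ⟨l, m⟩) * b)) * v ⟨k, j⟩ =
              (star (v ⟨k, i⟩) * a * v ⟨l, m⟩) * (star (v ⟨l, m⟩) * b * v ⟨k, j⟩) := by
            simp only [mul_assoc]
          rw [this, hcross _ _ _ hl.symm, zero_mul]
        · simp
      map_star' := fun a ↦ by
        ext k i j
        refine huniq (k := k) ?_
        have := congrArg star (hφ a k j i)
        simp only [star_mul, star_smul, star_star, hus] at this
        simp only [Matrix.of_apply, Pi.star_apply, Matrix.star_apply, ← hφ, ← this, mul_assoc] }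
  have hΦ (a k i j) : Φ a k i j = φ a k i j := rfl
  refine ⟨StarAlgEquiv.ofBijective Φ ⟨?_, fun M ↦ ?_⟩⟩
  · rw [injective_iff_map_eq_zero]
    intro a ha
    have hzero (x y : Σ k, Fin (d k)) : star (v x) * a * v y = 0 := by
      by_cases hxy : x.1 = y.1
      · obtain ⟨k, i⟩ := x
        obtain ⟨l, j⟩ := y
        obtain rfl : k = l := hxy
        rw [hφ, ← hΦ, ha]
        simp
      · exact hcross a x y hxy
    rw [← hsum' a, ← hsum a, Finset.sum_mul, Finset.sum_mul]
    refine Finset.sum_eq_zero fun x _ ↦ ?_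
    rw [Finset.mul_sum]
    refine Finset.sum_eq_zero fun y _ ↦ ?_
    rw [show v x * star (v x) * a * (v y * star (v y)) =
      v x * (star (v x) * a * v y) * star (v y) by simp only [mul_assoc], hzero, mul_zero, zero_mul]
  · refine ⟨∑ l, ∑ p, ∑ q, M l p q • (v ⟨l, p⟩ * star (v ⟨l, q⟩)), ?_⟩
    ext k i j
    refine huniq (k := k) ?_
    rw [hΦ, ← hφ]
    simp only [Finset.mul_sum, Finset.sum_mul, mul_smul_comm, smul_mul_assoc]
    have hterm (l p q) : star (v ⟨k, i⟩) * (v ⟨l, p⟩ * star (v ⟨l, q⟩)) * v ⟨k, j⟩ =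
        (star (v ⟨k, i⟩) * v ⟨l, p⟩) * (star (v ⟨l, q⟩) * v ⟨k, j⟩) := by
      simp only [mul_assoc]
    simp only [hterm, hvv]
    rw [Finset.sum_eq_single k, Finset.sum_eq_single i, Finset.sum_eq_single j]
    · simp [(hu k).isStarProjection.isIdempotentElem.eq]
    · intro q _ hq
      simp [hq]
    · simp
    · intro p _ hp
      simp [hp.symm]
    · simp
    · intro l _ hl
      simp [hl.symm]
    · simp

theorem exists_sigma_fin_equiv {ι : Type*} [Finite ι] (s : Setoid ι) :
    ∃ (n : ℕ) (d : Fin n → ℕ) (σ : (Σ k, Fin (d k)) ≃ ι), (∀ k, 0 < d k) ∧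
      ∀ x y, s (σ x) (σ y) ↔ x.1 = y.1 := by
  classical
  have := Fintype.ofFinite ι
  let e := (Fintype.equivFin (Quotient s)).symm
  let g (k) : Fin (Fintype.card {i : ι // Quotient.mk s i = e k}) ≃
      {i : ι // Quotient.mk s i = e k} := (Fintype.equivFin _).symm
  refine ⟨_, fun k ↦ Fintype.card {i : ι // Quotient.mk s i = e k},
    (Equiv.sigmaCongrRight g).trans ((Equiv.sigmaCongrLeft
      (β := fun c ↦ {i : ι // Quotient.mk s i = c}) e).trans
      (Equiv.sigmaFiberEquiv (Quotient.mk s))), fun k ↦ ?_, fun x y ↦ ?_⟩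
  · obtain ⟨i, hi⟩ := Quotient.exists_rep (e k)
    exact Fintype.card_pos_iff.mpr ⟨⟨i, hi⟩⟩
  · rw [← Quotient.eq]
    change Quotient.mk s (g x.1 x.2).1 = Quotient.mk s (g y.1 y.2).1 ↔ _
    rw [(g x.1 x.2).2, (g y.1 y.2).2, e.injective.eq_iff]

theorem forall_commute_pi_matrix_iff {n : ℕ} {d : Fin n → ℕ} (hd : ∀ k, 0 < d k) :
    (∀ M N : Π k : Fin n, Matrix (Fin (d k)) (Fin (d k)) ℂ, M * N = N * M) ↔ ∀ k, d k = 1 := by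
  constructor
  · intro hcomm k
    by_contra hk
    have h2 : 1 < d k := lt_of_le_of_ne (hd k) (Ne.symm hk)
    let i : Fin (d k) := ⟨0, hd k⟩
    let j : Fin (d k) := ⟨1, h2⟩
    have hij : i ≠ j := by simp [i, j]
    have := congrFun
      (hcomm (Pi.single k (Matrix.single i j 1)) (Pi.single k (Matrix.single j i 1))) k
    simp only [Pi.mul_apply, Pi.single_eq_same, Matrix.single_mul_single_same] at this
    simpa [Matrix.single_apply, hij.symm] using congrFun (congrFun this i) i
  · intro h1 M N
    ext k i j
    have : Subsingleton (Fin (d k)) := by rw [h1 k]; infer_instance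
    simp only [Pi.mul_apply, Matrix.mul_apply]
    refine Finset.sum_congr rfl fun m _ ↦ ?_
    rw [Subsingleton.elim m i, Subsingleton.elim j i, mul_comm]

/-- If `A` is a nonzero (not necessarily unital) C*-algebra in which the spectrum (in the
unitization) of every self-adjoint element is finite, then `A` is ⋆-isomorphic to a finite
direct sum of matrix algebras `⨁ₖ M_{dₖ}(ℂ)`, and `A` is abelian iff every `dₖ = 1`. -/
theorem star_iso_direct_sum_matrix_algebras_of_spectra_finite
    {A : Type*} [NonUnitalCStarAlgebra A] [Nontrivial A]
    (h : ∀ a : A, IsSelfAdjoint a → (quasispectrum ℂ a).Finite) :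
    ∃ (n : ℕ) (d : Fin n → ℕ), 0 < n ∧ (∀ k, 0 < d k) ∧
      Nonempty (A ≃⋆ₐ[ℂ] Π k : Fin n, Matrix (Fin (d k)) (Fin (d k)) ℂ) ∧
      ((∀ a b : A, a * b = b * a) ↔ ∀ k, d k = 1) := by
  obtain ⟨S, hfin, hmin, horth, hS⟩ := exists_orthogonal_isMinimalProjection h
  have : Finite S := hfin
  have hidem (p : S) : (p * p : A) = p := (hmin p p.2).isStarProjection.isIdempotentElem
  have hstar (p : S) : star (p : A) = p := (hmin p p.2).isStarProjection.isSelfAdjoint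
  let s : Setoid S :=
    { r := fun p q ↦ ∃ a : A, (p * a * q : A) ≠ 0
      iseqv :=
        { refl := fun p ↦ ⟨p, by rw [hidem, hidem]; exact (hmin p p.2).ne_zero⟩
          symm := by
            rintro p q ⟨a, ha⟩
            refine ⟨star a, fun h0 ↦ ha ?_⟩
            simpa [hstar, mul_assoc] using congrArg star h0
          trans := by
            rintro p q r ⟨a, ha⟩ ⟨b, hb⟩
            obtain ⟨v, hv, hv', hvq⟩ := (hmin q q.2).exists_partialIsometry (hmin p p.2) ha
            refine ⟨v * b, fun h0 ↦ hb ?_⟩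
            calc (q * b * r : A) = star v * (v * star v * (v * b) * r) := by
                  rw [← hv]
                  simp only [mul_assoc]
                  rw [← mul_assoc (star v) v (star v * _), hv, ← mul_assoc (star v) v, hv,
                    ← mul_assoc (q : A) b, ← mul_assoc (q : A), ← mul_assoc (q : A), hidem]
              _ = 0 := by rw [hv', h0, mul_zero] } }
  obtain ⟨n, d, σ, hd, hσ⟩ := exists_sigma_fin_equiv s
  have hv (x : Σ k, Fin (d k)) : ∃ v : A, star v * v = σ ⟨x.1, ⟨0, hd x.1⟩⟩ ∧
      v * star v = σ x ∧ v * σ ⟨x.1, ⟨0, hd x.1⟩⟩ = v := by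
    obtain ⟨a, ha⟩ := (hσ x ⟨x.1, ⟨0, hd x.1⟩⟩).mpr rfl
    exact (hmin _ (σ _).2).exists_partialIsometry (hmin _ (σ x).2) ha
  choose v hv1 hv2 hv3 using hv
  have hv4 (x) : σ x * v x = v x := by rw [← hv2, mul_assoc, hv1, hv3]
  have hv5 (x) : star (v x) * σ x = star (v x) := by
    simpa [hstar] using congrArg star (hv4 x)
  have hsum (a : A) : (∑ x, v x * star (v x)) * a = a := by
    refine (sub_eq_zero.mp (hS _ fun p hp ↦ ?_)).symm
    obtain ⟨x, hx⟩ := σ.surjective ⟨p, hp⟩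
    obtain rfl : (σ x : A) = p := by rw [hx]
    have : (σ x * ∑ y, v y * star (v y) : A) = σ x := by
      simp only [hv2]
      rw [Finset.mul_sum, Finset.sum_eq_single x]
      · exact hidem _
      · intro y _ hy
        exact horth (σ x).2 (σ y).2 fun he ↦ hy (σ.injective (Subtype.ext he)).symm
      · simp
    rw [mul_sub, ← mul_assoc, this, sub_self]
  obtain ⟨φ⟩ := nonempty_starAlgEquiv_of_columns (fun k ↦ (σ ⟨k, ⟨0, hd k⟩⟩ : A)) v
    (fun k ↦ hmin _ (σ _).2) (fun k l hkl a ↦ by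
      by_contra hne
      exact hkl ((hσ _ _).mp ⟨a, hne⟩)) hv3 (fun x y ↦ by
      split_ifs with hxy
      · rw [← hxy, hv1]
      · rw [← hv5, ← hv4 y, ← mul_assoc, mul_assoc (star (v x)),
          horth (σ x).2 (σ y).2 fun he ↦ hxy (σ.injective (Subtype.ext he)), mul_zero, zero_mul])
    hsum
  refine ⟨n, d, ?_, hd, ⟨φ⟩, ?_⟩
  · refine Nat.pos_of_ne_zero ?_
    rintro rfl
    obtain ⟨a, ha⟩ := exists_ne (0 : A)
    exact ha (φ.injective (Subsingleton.elim _ _))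
  · rw [← forall_commute_pi_matrix_iff hd]
    constructor
    · intro hc M N
      obtain ⟨a, rfl⟩ := φ.surjective M
      obtain ⟨b, rfl⟩ := φ.surjective N
      rw [← map_mul, hc, map_mul]
    · intro hc a b
      exact φ.injective (by rw [map_mul, hc, map_mul])
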